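/- Define θ_{A₄}(τ,z₁,…,z₄) := θ(τ,z₁)⋯θ(τ,z₄)·θ(τ,z₁+z₂+z₃+z₄) and θ_{A₆}(τ,z₁,…,z₆) := θ(τ,z₁)⋯θ(τ,z₆)·θ(τ,z₁+⋯+z₆). Then: (1) κ_{2A₄}(τ,z,z') := θ_{A₄}(τ,z)·θ_{A₄}(τ,z')/η(τ) is holomorphic on ℍ×ℂ⁸, and writing its Fourier expansion as Σ c(n,r) exp(2πi(nτ + r·(z,z'))) over n ∈ ℚ, n ≥ 0 and r ∈ (1/2)ℤ⁸, one has min{2n − rᵀG⁻¹r : c(n,r) ≠ 0} = 1/60 > 0, where G is the block-diagonal matrix diag(I₄+J₄, I₄+J₄); hence κ_{2A₄} is a Jacobi cusp form of critical weight 9/2 for 2A₄ with multiplier system v_η^5. (2) Similarly, κ_{A₄⊕A₆}(τ,z,z') := θ_{A₄}(τ,z)·θ_{A₆}(τ,z')/η(τ) is holomorphic on ℍ×ℂ¹⁰, and with G = diag(I₄+J₄, I₆+J₆) its Fourier expansion satisfies min{2n − rᵀG⁻¹r : c(n,r) ≠ 0} = 1/420 > 0; hence κ_{A₄⊕A₆}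 is a Jacobi cusp form of critical weight 11/2 for A₄⊕A₆ with multiplier system v_η^{11}. -/

import Mathlib

open Complex Matrix
open scoped Real BigOperators Classical

noncomputable section

abbrev SL2Z := Matrix.SpecialLinearGroup (Fin 2) ℤ

/-- The integral bilinear form attached to a Gram matrix `S`. -/
def bilinZ {ι : Type*} [Fintype ι] (S : Matrix ι ι ℤ) (x y : ι → ℤ) : ℤ :=
  ∑ i, ∑ j, x i * S i j * y j

def bilinQ {ι : Type*} [Fintype ι] (S : Matrix ι ι ℤ) (x y : ι → ℚ) : ℚ :=
  ∑ i, ∑ j, x i * (S i j : ℚ) * y j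

def bilinR {ι : Type*} [Fintype ι] (S : Matrix ι ι ℤ) (x y : ι → ℝ) : ℝ :=
  ∑ i, ∑ j, x i * (S i j : ℝ) * y j

def bilinC {ι : Type*} [Fintype ι] (S : Matrix ι ι ℤ) (x y : ι → ℂ) : ℂ :=
  ∑ i, ∑ j, x i * (S i j : ℂ) * y j

/-- `S` is the Gram matrix of an even positive definite lattice. -/
structure IsEvenPosDef {ι : Type*} [Fintype ι] (S : Matrix ι ι ℤ) : Prop where
  symm : S.IsSymm
  posdef : ∀ x : ι → ℚ, x ≠ 0 → 0 < bilinQ S x x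
  even_diag : ∀ i, (2 : ℤ) ∣ S i i

/-- `l ∈ (1/2) L^∨`, written in lattice coordinates:  `2(l,x) ∈ ℤ` for every lattice vector. -/
def InHalfDual {ι : Type*} [Fintype ι] (S : Matrix ι ι ℤ) (l : ι → ℚ) : Prop :=
  ∀ x : ι → ℤ, ∃ m : ℤ, 2 * bilinQ S l (fun i => (x i : ℚ)) = m

/-- `φ` is a holomorphic Jacobi form of weight `k` and index `t` for the lattice `(ℤ^ι, S)`
with `SL₂(ℤ)`-character (multiplier system) `χ`, Heisenberg character `ν`,
and Fourier coefficients `f`. -/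
structure IsJacobiForm {ι : Type*} [Fintype ι] (S : Matrix ι ι ℤ) (k t : ℚ)
    (χ : SL2Z → ℂ) (ν : (ι → ℤ) → (ι → ℤ) → ℂ)
    (f : ℚ × (ι → ℚ) → ℂ) (φ : ℂ → (ι → ℂ) → ℂ) : Prop where
  holo : DifferentiableOn ℂ (fun p : ℂ × (ι → ℂ) => φ p.1 p.2) {p | 0 < p.1.im}
  modular : ∀ A : SL2Z, ∀ τ : ℂ, 0 < τ.im → ∀ z : ι → ℂ,
    φ (((A.1 0 0 : ℂ) * τ + (A.1 0 1 : ℂ)) / ((A.1 1 0 : ℂ) * τ + (A.1 1 1 : ℂ)))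
        (fun i => z i / ((A.1 1 0 : ℂ) * τ + (A.1 1 1 : ℂ)))
      = χ A * ((A.1 1 0 : ℂ) * τ + (A.1 1 1 : ℂ)) ^ (k : ℂ)
        * Complex.exp ((π : ℂ) * I * (t : ℂ) * (A.1 1 0 : ℂ) * bilinC S z z
            / ((A.1 1 0 : ℂ) * τ + (A.1 1 1 : ℂ)))
        * φ τ z
  elliptic : ∀ x y : ι → ℤ, ∀ τ : ℂ, 0 < τ.im → ∀ z : ι → ℂ,
    φ τ (fun i => z i + (x i : ℂ) * τ + (y i : ℂ))
      = ν x y * Complex.exp (-((π : ℂ) * I * (t : ℂ))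
            * ((bilinZ S x x : ℂ) * τ + 2 * bilinC S (fun i => (x i : ℂ)) z))
        * φ τ z
  support : ∀ p : ℚ × (ι → ℚ), f p ≠ 0 →
    0 ≤ p.1 ∧ InHalfDual S p.2 ∧ 0 ≤ 2 * p.1 * t - bilinQ S p.2 p.2
  expansion : ∀ τ : ℂ, 0 < τ.im → ∀ z : ι → ℂ,
    HasSum (fun p : ℚ × (ι → ℚ) =>
        f p * Complex.exp (2 * (π : ℂ) * I *
          ((p.1 : ℂ) * τ + bilinC S (fun i => (p.2 i : ℂ)) z))) (φ τ z)

/-- The Fourier coefficients `f` are supported on indices of positive hyperbolic norm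
(cusp form condition). -/
def IsCuspSupport {ι : Type*} [Fintype ι] (S : Matrix ι ι ℤ) (t : ℚ)
    (f : ℚ × (ι → ℚ) → ℂ) : Prop :=
  ∀ p : ℚ × (ι → ℚ), f p ≠ 0 → 0 < 2 * p.1 * t - bilinQ S p.2 p.2

/-- `c` is a root of unity. -/
def HasFiniteOrder (c : ℂ) : Prop := ∃ N : ℕ, 0 < N ∧ c ^ N = 1

/-- The quadratic character mod 4. -/
def chi4 (n : ℤ) : ℂ := if n % 4 = 1 then 1 else if n % 4 = 3 then -1 else 0

/-- The classical Jacobi theta-series of characteristic `(1/2,1/2)`. -/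
def jtheta (τ z : ℂ) : ℂ :=
  ∑' n : ℤ, chi4 n *
    Complex.exp (2 * (π : ℂ) * I * (((n : ℂ) ^ 2 * τ) / 8 + (n : ℂ) * z / 2))

/-- The Dedekind eta function. -/
def dedekindEta (τ : ℂ) : ℂ :=
  Complex.exp ((π : ℂ) * I * τ / 12) *
    ∏' n : ℕ, (1 - Complex.exp (2 * (π : ℂ) * I * ((n : ℂ) + 1) * τ))

/-- Gram matrix `I_m + J_m` of the root lattice `A_m`. -/
def AmGram (m : ℕ) : Matrix (Fin m) (Fin m) ℤ :=
  Matrix.of fun i j => if i = j then 2 else 1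

/-- `θ_{A_m}(τ,z) = θ(τ,z₁)⋯θ(τ,z_m)·θ(τ,z₁+⋯+z_m)`. -/
def thetaAm (m : ℕ) : ℂ → (Fin m → ℂ) → ℂ :=
  fun τ z => (∏ i, jtheta τ (z i)) * jtheta τ (∑ i, z i)

/-- `κ_{2A₄} = θ_{A₄} ⊗ θ_{A₄} / η`. -/
def kappa2A4 : ℂ → (Fin 4 ⊕ Fin 4 → ℂ) → ℂ :=
  fun τ z => thetaAm 4 τ (z ∘ Sum.inl) * thetaAm 4 τ (z ∘ Sum.inr) / dedekindEta τ

/-- `κ_{A₄⊕A₆} = θ_{A₄} ⊗ θ_{A₆} / η`. -/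
def kappaA4A6 : ℂ → (Fin 4 ⊕ Fin 6 → ℂ) → ℂ :=
  fun τ z => thetaAm 4 τ (z ∘ Sum.inl) * thetaAm 6 τ (z ∘ Sum.inr) / dedekindEta τ

/-!
Both forms are theta blocks `∏ⱼ θ(τ, bⱼ(z))` divided by `η`. The Gram matrix of the lattice is
`BᵀB`, where the rows of `B` are the linear forms `bⱼ`, so the product has the elliptic and modular
transformation laws of its factors; the multiplier systems of `θ` and `η³` agree, which reduces the
modular law of `θ` to that of `θ/η³` under the two generators of `SL₂(ℤ)`.

In the Fourier expansion, the product of the terms of odd indices `nⱼ` of the theta series with the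
`k`-th term of `1/η` has hyperbolic norm `d(n/2) - 1/12 + 2k`, where `d(w)` is the squared distance
from `w` to the column space of `B`. For `A_m` this space is the hyperplane `∑ᵢ wᵢ = w_{m+1}`, and
`d(n/2) = s²/(4(m+1))` with `s = n₁ + ⋯ + n_m - n_{m+1}`. When `m` is even, `s` is odd, so the
smallest distance is `1/(4(m+1))`. Distances add up in orthogonal sums, which gives the minima
`1/20 + 1/20 - 1/12 = 1/60` and `1/20 + 1/28 - 1/12 = 1/420`. The minimum is attained because a
single term has the exponent in question, hence nothing cancels.
-/

/-! ### The theta series -/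

section Chi4

lemma chi4_two_mul_add_one (m : ℤ) : chi4 (2 * m + 1) = (-1) ^ m := by
  obtain hm | hm := Int.even_or_odd m
  · rw [hm.neg_one_zpow, chi4, if_pos (by grind)]
  · rw [hm.neg_one_zpow, chi4, if_neg (by grind), if_pos (by grind)]

lemma chi4_eq_zero_iff {n : ℤ} : chi4 n = 0 ↔ Even n := by
  unfold chi4
  split_ifs <;> simp [Int.even_iff] <;> omega

lemma chi4_ne_zero_iff {n : ℤ} : chi4 n ≠ 0 ↔ Odd n := by
  rw [Ne, chi4_eq_zero_iff, Int.not_even_iff_odd]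

lemma norm_chi4_le_one (n : ℤ) : ‖chi4 n‖ ≤ 1 := by
  unfold chi4
  split_ifs <;> simp

lemma chi4_add_two_mul (n x : ℤ) : chi4 (n + 2 * x) = (-1) ^ x * chi4 n := by
  obtain hn | ⟨m, rfl⟩ := Int.even_or_odd n
  · rw [chi4_eq_zero_iff.2 hn, chi4_eq_zero_iff.2 (by grind), mul_zero]
  · rw [show 2 * m + 1 + 2 * x = 2 * (x + m) + 1 by ring, chi4_two_mul_add_one,
      chi4_two_mul_add_one, zpow_add₀ (by norm_num)]

end Chi4

section Theta

variable {τ : ℂ}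

lemma summable_jtheta_term (hτ : 0 < τ.im) (z : ℂ) :
    Summable fun n : ℤ ↦ ‖chi4 n * cexp (2 * π * I * (n ^ 2 * τ / 8 + n * z / 2))‖ := by
  have hτ4 : 0 < (τ / 4).im := by simpa using hτ
  refine .of_nonneg_of_le (fun _ ↦ norm_nonneg _) (fun n ↦ ?_)
    ((summable_jacobiTheta₂_term_iff (z / 2) (τ / 4)).2 hτ4).norm
  rw [norm_mul, jacobiTheta₂_term]
  refine (mul_le_of_le_one_left (norm_nonneg _) (norm_chi4_le_one n)).trans_eq ?_
  congr 2
  ring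

lemma jtheta_eq_jacobiTheta₂ (τ z : ℂ) :
    jtheta τ z = cexp (π * I * (τ / 4 + z)) * jacobiTheta₂ (z + τ / 2 + 1 / 2) τ := by
  have hinj : Function.Injective fun m : ℤ ↦ 2 * m + 1 := fun a b h ↦ by grind
  unfold jtheta jacobiTheta₂
  rw [← tsum_mul_left, ← hinj.tsum_eq]
  · refine tsum_congr fun m ↦ ?_
    rw [chi4_two_mul_add_one, ← exp_pi_mul_I, ← exp_int_mul, jacobiTheta₂_term, ← Complex.exp_add,
      ← Complex.exp_add]
    congr 1
    push_cast
    ring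
  · intro n hn
    obtain ⟨m, rfl⟩ := chi4_ne_zero_iff.1 (left_ne_zero_of_mul hn)
    exact ⟨m, rfl⟩

lemma differentiableAt_jtheta (hτ : 0 < τ.im) (z : ℂ) :
    DifferentiableAt ℂ (fun p : ℂ × ℂ ↦ jtheta p.1 p.2) (τ, z) := by
  simp_rw [jtheta_eq_jacobiTheta₂]
  refine .mul (by fun_prop) ?_
  exact (hasFDerivAt_jacobiTheta₂ (z + τ / 2 + 1 / 2) hτ).differentiableAt.comp (τ, z)
    (f := fun p : ℂ × ℂ ↦ (p.2 + p.1 / 2 + 1 / 2, p.1)) (by fun_prop)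

lemma jtheta_add_intCast (τ z : ℂ) (y : ℤ) : jtheta τ (z + y) = (-1) ^ y * jtheta τ z := by
  unfold jtheta
  rw [← tsum_mul_left]
  refine tsum_congr fun n ↦ ?_
  obtain hn | ⟨m, rfl⟩ := Int.even_or_odd n
  · simp [chi4_eq_zero_iff.2 hn]
  · rw [mul_left_comm, ← exp_pi_mul_I, ← exp_int_mul, ← Complex.exp_add,
      Complex.exp_eq_exp_iff_exists_int.2 ⟨m * y, ?_⟩]
    push_cast
    ring

lemma jtheta_add_intCast_mul (τ z : ℂ) (x : ℤ) :
    jtheta τ (z + x * τ) = (-1) ^ x * cexp (-(π * I) * (x ^ 2 * τ + 2 * (x * z))) * jtheta τ z := by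
  unfold jtheta
  rw [← tsum_mul_left, ← (Equiv.addRight (2 * x)).tsum_eq (fun n ↦ _ * (chi4 n * _))]
  refine tsum_congr fun n ↦ ?_
  have hsq : (-1 : ℂ) ^ x * (-1) ^ x = 1 := by rw [← mul_zpow]; simp
  have hexp : cexp (2 * π * I * (n ^ 2 * τ / 8 + n * (z + x * τ) / 2)) =
      cexp (-(π * I) * (x ^ 2 * τ + 2 * (x * z))) *
        cexp (2 * π * I * ((n + 2 * x : ℤ) ^ 2 * τ / 8 + (n + 2 * x : ℤ) * z / 2)) := by
    rw [← Complex.exp_add]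
    congr 1
    push_cast
    ring
  rw [Equiv.coe_addRight, chi4_add_two_mul, hexp]
  linear_combination (-chi4 n * cexp (-(π * I) * (x ^ 2 * τ + 2 * (x * z))) *
    cexp (2 * π * I * ((n + 2 * x : ℤ) ^ 2 * τ / 8 + (n + 2 * x : ℤ) * z / 2))) * hsq

lemma jtheta_add_one_left (τ z : ℂ) : jtheta (τ + 1) z = cexp (π * I / 4) * jtheta τ z := by
  unfold jtheta
  rw [← tsum_mul_left]
  refine tsum_congr fun n ↦ ?_
  obtain hn | ⟨m, rfl⟩ := Int.even_or_odd n
  · simp [chi4_eq_zero_iff.2 hn]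
  · obtain ⟨k, hk⟩ := Int.even_mul_succ_self m
    have hk' : (m : ℂ) * (m + 1) = k + k := mod_cast hk
    rw [mul_left_comm, ← Complex.exp_add, Complex.exp_eq_exp_iff_exists_int.2 ⟨k, ?_⟩]
    push_cast
    linear_combination π * I * hk'

lemma jtheta_neg_one_div (hτ : τ ≠ 0) (z : ℂ) : jtheta (-1 / τ) (z / τ) =
    -I * (-I * τ) ^ (1 / 2 : ℂ) * cexp (π * I * z ^ 2 / τ) * jtheta τ z := by
  have hI : -I = cexp (-(π / 2 * I)) := by
    rw [Complex.exp_neg, exp_pi_div_two_mul_I, inv_I]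
  have hexp : cexp (π * I * (-1 / τ / 4 + z / τ)) = -I * cexp (π * I * z ^ 2 / τ) *
      cexp (π * I * (τ / 4 + z)) * cexp (-π * I * (z + τ / 2 - 1 / 2) ^ 2 / τ) := by
    rw [hI]
    simp only [← Complex.exp_add]
    congr 1
    field_simp
    ring
  rw [jtheta_eq_jacobiTheta₂, jtheta_eq_jacobiTheta₂, hexp,
    show z + τ / 2 + 1 / 2 = z + τ / 2 - 1 / 2 + 1 by ring, jacobiTheta₂_add_left,
    jacobiTheta₂_functional_equation (z + τ / 2 - 1 / 2) τ,
    show (z + τ / 2 - 1 / 2) / τ = z / τ + -1 / τ / 2 + 1 / 2 by field_simp; ring]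
  field_simp

end Theta

/-! ### The eta function -/

section Eta

open UpperHalfPlane hiding I

variable {τ : ℂ}

lemma dedekindEta_eq_eta : dedekindEta = ModularForm.eta := by
  ext τ
  unfold dedekindEta ModularForm.eta
  congr 1
  · rw [Function.Periodic.qParam]
    congr 1
    push_cast
    ring
  · simp_rw [ModularForm.eta_q_eq_cexp]

lemma dedekindEta_ne_zero (hτ : 0 < τ.im) : dedekindEta τ ≠ 0 := by
  rw [dedekindEta_eq_eta]
  exact ModularForm.eta_ne_zero hτ

lemma differentiableAt_dedekindEta (hτ : 0 < τ.im) : DifferentiableAt ℂ dedekindEta τ := by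
  rw [dedekindEta_eq_eta]
  exact ModularForm.differentiableAt_eta_of_mem_upperHalfPlaneSet hτ

lemma dedekindEta_add_one (τ : ℂ) :
    dedekindEta (τ + 1) = cexp (π * I / 12) * dedekindEta τ := by
  unfold dedekindEta
  rw [← mul_assoc, ← Complex.exp_add]
  congr 1
  · congr 1
    ring
  · refine tprod_congr fun n ↦ ?_
    rw [Complex.exp_eq_exp_iff_exists_int.2 ⟨n + 1, ?_⟩]
    push_cast
    ring

lemma dedekindEta_neg_one_div (hτ : 0 < τ.im) :
    dedekindEta (-1 / τ) = (-I * τ) ^ (1 / 2 : ℂ) * dedekindEta τ := by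
  have hτ0 : τ ≠ 0 := by rintro rfl; simp at hτ
  have hlog : Complex.log (-I * τ) = -(π / 2) * I + Complex.log τ := by
    rw [Complex.log_mul (by simp) hτ0 ?_, log_neg_I]
    · rw [arg_neg_I]
      constructor <;> linarith [arg_nonneg_iff.2 hτ.le, arg_le_pi τ, Real.pi_pos]
  have h := ModularForm.eta_comp_eq_csqrt_I_inv hτ
  simp only [Function.comp, Pi.smul_apply, Pi.mul_apply, smul_eq_mul] at h
  rw [dedekindEta_eq_eta, h, ← mul_assoc, _root_.sqrt_eq_exp hτ0, _root_.sqrt_eq_exp I_ne_zero,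
    ← Complex.exp_neg, ← Complex.exp_add, cpow_def_of_ne_zero (by simp [hτ0]), hlog, log_I]
  congr 2
  ring

lemma dedekindEta_smul_pow_24 (A : SL2Z) (τ : ℍ) :
    dedekindEta (A • τ : ℍ) ^ 24 = denom A τ ^ 12 * dedekindEta τ ^ 24 := by
  have h := SlashInvariantForm.slash_action_eqn'' CuspForm.discriminant (γ := (A : GL (Fin 2) ℝ))
    (MonoidHom.mem_range.2 ⟨A, rfl⟩) τ
  simp only [dedekindEta_eq_eta]
  exact_mod_cast h

end Eta

/-! ### Modularity of the theta series -/

section Modular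

open UpperHalfPlane hiding I

/-- The automorphy factor `(cτ+d)^k exp(2πi m c z²/(cτ+d))` of classical Jacobi forms of weight `k`
and index `m`. -/
def jacobiFactor (k : ℤ) (m : ℂ) (A : SL2Z) (τ : ℍ) (z : ℂ) : ℂ :=
  denom A τ ^ k * cexp (2 * π * I * m * (A 1 0 * z ^ 2 / denom A τ))

lemma denom_mul (A B : SL2Z) (τ : ℍ) :
    denom (A * B : SL2Z) τ = denom A (B • τ : ℍ) * denom B τ := by
  simpa [σ] using denom_cocycle_σ A B τ

lemma jacobiFactor_mul (k : ℤ) (m : ℂ) (A B : SL2Z) (τ : ℍ) (z : ℂ) :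
    jacobiFactor k m (A * B) τ z =
      jacobiFactor k m A (B • τ) (z / denom B τ) * jacobiFactor k m B τ z := by
  have hA : denom A (B • τ : ℍ) ≠ 0 := denom_ne_zero _ _
  have hB : denom B τ ≠ 0 := denom_ne_zero _ _
  have hdet : (B 0 0 * B 1 1 - B 0 1 * B 1 0 : ℂ) = 1 := by
    exact_mod_cast (det_fin_two B.1).symm.trans B.2
  have hc : ((A * B) 1 0 : ℂ) * denom B τ = A 1 0 + B 1 0 * denom (A * B : SL2Z) τ := by
    have hrow (j : Fin 2) : (A * B) 1 j = A 1 0 * B 0 j + A 1 1 * B 1 j :=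
      (Matrix.mul_apply (M := A.1) (N := B.1)).trans (Fin.sum_univ_two _)
    rw [ModularGroup.denom_apply, ModularGroup.denom_apply, hrow, hrow]
    push_cast
    linear_combination (A 1 0 : ℂ) * hdet
  have hexp : (A * B) 1 0 * z ^ 2 / denom (A * B : SL2Z) τ =
      A 1 0 * (z / denom B τ) ^ 2 / denom A (B • τ : ℍ) + B 1 0 * z ^ 2 / denom B τ := by
    rw [denom_mul] at hc ⊢
    field_simp
    linear_combination z ^ 2 * hc
  rw [jacobiFactor, hexp, denom_mul, mul_zpow, mul_add, Complex.exp_add, jacobiFactor, jacobiFactor]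
  ring

lemma jacobiFactor_one (k : ℤ) (m : ℂ) (τ : ℍ) (z : ℂ) : jacobiFactor k m 1 τ z = 1 := by
  simp [jacobiFactor]

/-- The group of modular substitutions under which `F` transforms like a Jacobi form of weight `k`
and index `m`. -/
def jacobiStabilizer (F : ℍ → ℂ → ℂ) (k : ℤ) (m : ℂ) : Subgroup SL2Z where
  carrier := {A | ∀ τ z, F (A • τ) (z / denom A τ) = jacobiFactor k m A τ z * F τ z}
  mul_mem' {A B} hA hB τ z := by
    rw [jacobiFactor_mul, mul_assoc, ← hB, ← hA, denom_mul, mul_comm (denom A _),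
      div_mul_eq_div_div, mul_smul]
  one_mem' τ z := by simp [jacobiFactor_one]
  inv_mem' {A} hA τ z := by
    have hfactor := jacobiFactor_mul k m A A⁻¹ τ z
    have hdenom := denom_mul A A⁻¹ τ
    rw [mul_inv_cancel] at hfactor hdenom
    rw [jacobiFactor_one] at hfactor
    have h := hA (A⁻¹ • τ) (z / denom (A⁻¹ : SL2Z) τ)
    rw [smul_inv_smul, div_div, mul_comm (denom _ _), ← hdenom, map_one, map_one, denom_one,
      div_one] at h
    rw [h, ← mul_assoc, mul_comm (jacobiFactor k m A⁻¹ τ z), ← hfactor, one_mul]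

lemma jacobiStabilizer_eq_top {F : ℍ → ℂ → ℂ} {k : ℤ} {m : ℂ}
    (hS : ∀ τ : ℍ, ∀ z : ℂ, F (ModularGroup.S • τ) (z / τ) =
      τ ^ k * cexp (2 * π * I * m * (z ^ 2 / τ)) * F τ z)
    (hT : ∀ τ : ℍ, ∀ z : ℂ, F (ModularGroup.T • τ) z = F τ z) : jacobiStabilizer F k m = ⊤ := by
  rw [eq_top_iff, ← SpecialLinearGroup.SL2Z_generators, Subgroup.closure_le]
  rintro A (rfl | rfl) τ z
  · simpa [jacobiFactor, ModularGroup.denom_S, ModularGroup.coe_S, -ModularGroup.sl_moeb] using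
      hS τ z
  · simpa [jacobiFactor, ModularGroup.denom_apply, ModularGroup.coe_T, -ModularGroup.sl_moeb] using
      hT τ z

lemma jacobiStabilizer_jtheta_div_dedekindEta_pow :
    jacobiStabilizer (fun τ z ↦ jtheta τ z / dedekindEta τ ^ 3) (-1) (1 / 2) = ⊤ := by
  refine jacobiStabilizer_eq_top (fun τ z ↦ ?_) fun τ z ↦ ?_
  · have hτ := τ.ne_zero
    have hη := dedekindEta_ne_zero τ.im_pos
    have hroot_sq : ((-I * τ : ℂ) ^ (1 / 2 : ℂ)) ^ 2 = -I * τ := by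
      rw [← cpow_nat_mul]
      norm_num
    rw [UpperHalfPlane.modular_S_smul, coe_mk, inv_neg, ← one_div, ← neg_div,
      jtheta_neg_one_div hτ, dedekindEta_neg_one_div τ.im_pos, mul_pow, pow_succ _ 2, hroot_sq,
      _root_.zpow_neg_one]
    have hI := I_ne_zero
    field_simp
  · have hexp : cexp (π * I / 12) ^ 3 = cexp (π * I / 4) := by
      rw [← Complex.exp_nat_mul]
      congr 1
      push_cast
      ring
    rw [UpperHalfPlane.modular_T_smul, coe_vadd, ofReal_one, add_comm (1 : ℂ), jtheta_add_one_left,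
      dedekindEta_add_one, mul_pow, hexp, mul_div_mul_left _ _ (Complex.exp_ne_zero _)]

lemma jtheta_smul (A : SL2Z) (τ : ℍ) (z : ℂ) :
    jtheta (A • τ : ℍ) (z / denom A τ) = (dedekindEta (A • τ : ℍ) / dedekindEta τ) ^ 3 *
      (denom A τ)⁻¹ * cexp (π * I * (A 1 0 * z ^ 2 / denom A τ)) * jtheta τ z := by
  have hA : A ∈ jacobiStabilizer (fun τ z ↦ jtheta τ z / dedekindEta τ ^ 3) (-1) (1 / 2) :=
    jacobiStabilizer_jtheta_div_dedekindEta_pow ▸ Subgroup.mem_top A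
  have h := hA τ z
  have hη := dedekindEta_ne_zero τ.im_pos
  have hηA := dedekindEta_ne_zero (A • τ).im_pos
  rw [div_eq_iff (pow_ne_zero 3 hηA), jacobiFactor, _root_.zpow_neg_one,
    show 2 * π * I * (1 / 2) = π * I by ring] at h
  rw [h]
  ring

end Modular

/-! ### Theta blocks -/

section LinearForms

variable {ι κ μ R R' : Type*} [Fintype ι] [CommRing R] [CommRing R']

/-- The integer linear forms given by the rows of `B`, as a linear map over an arbitrary ring. -/
def linearForms (B : Matrix κ ι ℤ) : (ι → R) →ₗ[R] κ → R := (B.map Int.cast).mulVecLin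

lemma linearForms_apply (B : Matrix κ ι ℤ) (x : ι → R) (j : κ) :
    linearForms B x j = ∑ i, B j i * x i := rfl

lemma linearForms_comp_ringHom (B : Matrix κ ι ℤ) (f : R →+* R') (x : ι → R) :
    linearForms B (f ∘ x) = f ∘ linearForms B x := by
  ext j
  simp [linearForms_apply]

variable [Fintype κ]

lemma linearForms_mul (A : Matrix μ κ ℤ) (B : Matrix κ ι ℤ) (x : ι → R) :
    linearForms (A * B) x = linearForms A (linearForms B x) := by
  ext j
  simp only [linearForms_apply, Matrix.mul_apply, Int.cast_sum, Int.cast_mul, Finset.sum_mul,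
    Finset.mul_sum, mul_assoc]
  exact Finset.sum_comm

lemma dotProduct_linearForms_transpose (B : Matrix κ ι ℤ) (x : ι → R) (w : κ → R) :
    x ⬝ᵥ linearForms Bᵀ w = linearForms B x ⬝ᵥ w := by
  simp only [dotProduct, linearForms_apply, transpose_apply, Finset.mul_sum, Finset.sum_mul]
  rw [Finset.sum_comm]
  exact Finset.sum_congr rfl fun j _ ↦ Finset.sum_congr rfl fun i _ ↦ by ring

lemma sum_sum_gram_eq_dotProduct (B : Matrix κ ι ℤ) (x y : ι → R) :
    ∑ i, ∑ j, x i * ((Bᵀ * B) i j : R) * y j = linearForms B x ⬝ᵥ linearForms B y := by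
  rw [← dotProduct_linearForms_transpose, ← linearForms_mul]
  simp only [dotProduct, linearForms_apply, Finset.mul_sum, mul_assoc]

lemma bilinZ_gram (B : Matrix κ ι ℤ) (x y : ι → ℤ) :
    bilinZ (Bᵀ * B) x y = linearForms B x ⬝ᵥ linearForms B y :=
  sum_sum_gram_eq_dotProduct B x y

lemma bilinQ_gram (B : Matrix κ ι ℤ) (x y : ι → ℚ) :
    bilinQ (Bᵀ * B) x y = linearForms B x ⬝ᵥ linearForms B y :=
  sum_sum_gram_eq_dotProduct B x y

lemma bilinC_gram (B : Matrix κ ι ℤ) (x y : ι → ℂ) :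
    bilinC (Bᵀ * B) x y = linearForms B x ⬝ᵥ linearForms B y :=
  sum_sum_gram_eq_dotProduct B x y

end LinearForms

section ThetaBlock

open UpperHalfPlane hiding I

variable {ι κ : Type*} [Fintype ι] [Fintype κ]

/-- The theta block `∏ⱼ θ(τ, bⱼ(z))` of the integer linear forms `bⱼ` given by the rows of `B`. -/
def thetaBlock (B : Matrix κ ι ℤ) (τ : ℂ) (z : ι → ℂ) : ℂ := ∏ j, jtheta τ (linearForms B z j)

lemma differentiableAt_thetaBlock (B : Matrix κ ι ℤ) {τ : ℂ} (hτ : 0 < τ.im) (z : ι → ℂ) :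
    DifferentiableAt ℂ (fun p : ℂ × (ι → ℂ) ↦ thetaBlock B p.1 p.2) (τ, z) := by
  refine (HasFDerivAt.finsetProd fun j _ ↦ DifferentiableAt.hasFDerivAt ?_).differentiableAt
  refine (differentiableAt_jtheta hτ (linearForms B z j)).comp (τ, z)
    (f := fun p : ℂ × (ι → ℂ) ↦ (p.1, linearForms B p.2 j)) ?_
  simp only [linearForms_apply]
  fun_prop

lemma prod_neg_one_zpow_linearForms {B : Matrix κ ι ℤ} (hB : ∀ i, Even (∑ j, B j i))
    (x : ι → ℤ) : ∏ j, (-1 : ℂ) ^ linearForms B x j = 1 := by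
  have heven : Even (∑ j, linearForms B x j) := by
    simp only [linearForms_apply, Int.cast_id]
    rw [Finset.sum_comm, even_iff_two_dvd]
    refine Finset.dvd_sum fun i _ ↦ ?_
    rw [← Finset.sum_mul]
    exact (hB i).two_dvd.mul_right _
  simp only [← exp_pi_mul_I, ← exp_int_mul]
  rw [← exp_sum, ← Finset.sum_mul, ← Int.cast_sum, exp_int_mul, exp_pi_mul_I, heven.neg_one_zpow]

lemma thetaBlock_add_mul_add {B : Matrix κ ι ℤ} (hB : ∀ i, Even (∑ j, B j i)) (τ : ℂ) (z : ι → ℂ)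
    (x y : ι → ℤ) :
    thetaBlock B τ (fun i ↦ z i + x i * τ + y i) =
      cexp (-(π * I) * (bilinZ (Bᵀ * B) x x * τ + 2 * bilinC (Bᵀ * B) (fun i ↦ x i) z)) *
        thetaBlock B τ z := by
  have hcast (w : ι → ℤ) (j : κ) : linearForms B (fun i ↦ (w i : ℂ)) j = (linearForms B w j : ℤ) :=
    congrFun (linearForms_comp_ringHom B (Int.castRingHom ℂ) w) j
  have harg (j : κ) : linearForms B (fun i ↦ z i + x i * τ + y i) j =
      linearForms B z j + (linearForms B x j : ℤ) * τ + (linearForms B y j : ℤ) := by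
    rw [← hcast, ← hcast]
    simp only [linearForms_apply, mul_add, Finset.sum_add_distrib, Finset.sum_mul, mul_assoc]
  have hexp : -(π * I) * (bilinZ (Bᵀ * B) x x * τ + 2 * bilinC (Bᵀ * B) (fun i ↦ x i) z) =
      ∑ j, -(π * I) * ((linearForms B x j : ℤ) ^ 2 * τ +
        2 * ((linearForms B x j : ℤ) * linearForms B z j)) := by
    rw [bilinZ_gram, bilinC_gram, ← Finset.mul_sum, Finset.sum_add_distrib, ← Finset.sum_mul,
      ← Finset.mul_sum]
    simp only [dotProduct, hcast, Int.cast_sum, Int.cast_mul, sq]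
  simp only [thetaBlock, harg, jtheta_add_intCast, jtheta_add_intCast_mul, Finset.prod_mul_distrib,
    prod_neg_one_zpow_linearForms hB, one_mul, ← exp_sum, hexp]

lemma thetaBlock_smul (B : Matrix κ ι ℤ) (A : SL2Z) (τ : ℍ) (z : ι → ℂ) :
    thetaBlock B (A • τ : ℍ) (fun i ↦ z i / denom A τ) =
      (dedekindEta (A • τ : ℍ) / dedekindEta τ) ^ (3 * Fintype.card κ) *
        (denom A τ ^ Fintype.card κ)⁻¹ *
          cexp (π * I * (A 1 0 * bilinC (Bᵀ * B) z z / denom A τ)) * thetaBlock B τ z := by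
  have harg (j : κ) : linearForms B (fun i ↦ z i / denom A τ) j =
      linearForms B z j / denom A τ := by
    simp only [linearForms_apply, Finset.sum_div, mul_div_assoc]
  have hexp : π * I * (A 1 0 * bilinC (Bᵀ * B) z z / denom A τ) =
      ∑ j, π * I * (A 1 0 * linearForms B z j ^ 2 / denom A τ) := by
    rw [bilinC_gram, ← Finset.mul_sum, ← Finset.sum_div, ← Finset.mul_sum]
    simp only [dotProduct, sq]
  simp only [thetaBlock, harg, jtheta_smul, Finset.prod_mul_distrib, Finset.prod_const,
    Finset.card_univ, hexp, exp_sum, pow_mul, inv_pow]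

lemma thetaBlock_div_dedekindEta_smul (B : Matrix κ ι ℤ) {N r : ℕ}
    (hN : N + 24 * r + 1 = 3 * Fintype.card κ) {v : ℂ} (A : SL2Z) {τ : ℍ}
    (hv : dedekindEta (A • τ : ℍ) ^ N = v * denom A τ ^ ((N : ℂ) / 2) * dedekindEta τ ^ N)
    (z : ι → ℂ) :
    thetaBlock B (A • τ : ℍ) (fun i ↦ z i / denom A τ) / dedekindEta (A • τ : ℍ) =
      v * denom A τ ^ (((Fintype.card κ : ℂ) - 1) / 2) *
        cexp (π * I * (A 1 0 * bilinC (Bᵀ * B) z z / denom A τ)) *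
          (thetaBlock B τ z / dedekindEta τ) := by
  have hη := dedekindEta_ne_zero τ.im_pos
  have hηA := dedekindEta_ne_zero (A • τ).im_pos
  have hj : denom A τ ≠ 0 := denom_ne_zero _ _
  have hweight : denom A τ ^ (((Fintype.card κ : ℂ) - 1) / 2) =
      denom A τ ^ ((N : ℂ) / 2) * (denom A τ ^ 12) ^ r * (denom A τ ^ Fintype.card κ)⁻¹ := by
    have hN' : (N + 24 * r + 1 : ℂ) = 3 * Fintype.card κ := mod_cast hN
    rw [← pow_mul, ← cpow_natCast, ← cpow_natCast, ← cpow_neg, ← cpow_add _ _ hj,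
      ← cpow_add _ _ hj]
    congr 1
    push_cast
    linear_combination -hN' / 2
  have hquot : (dedekindEta (A • τ : ℍ) / dedekindEta τ) ^ (3 * Fintype.card κ) =
      v * denom A τ ^ ((N : ℂ) / 2) * (denom A τ ^ 12) ^ r *
        (dedekindEta (A • τ : ℍ) / dedekindEta τ) := by
    rw [← hN, pow_succ, pow_add, div_pow, hv, pow_mul, div_pow, dedekindEta_smul_pow_24]
    field_simp
  rw [thetaBlock_smul, hquot, hweight]
  field_simp

end ThetaBlock

/-! ### Fourier expansions -/

lemma hasSum_mul_prod {X Y : Type*} {f : X → ℂ} {g : Y → ℂ} {a b : ℂ} (hf : HasSum f a)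
    (hg : HasSum g b) : HasSum (fun p : X × Y ↦ f p.1 * g p.2) (a * b) :=
  hf.mul hg (summable_mul_of_summable_norm hf.summable.norm hg.summable.norm)

lemma hasSum_prod_fin {β : Type*} {n : ℕ} {f : Fin n → β → ℂ} {a : Fin n → ℂ}
    (hf : ∀ j, HasSum (f j) (a j)) :
    HasSum (fun x : Fin n → β ↦ ∏ j, f j (x j)) (∏ j, a j) := by
  induction n with
  | zero => simp
  | succ n ih =>
    rw [Fin.prod_univ_succ, ← (Fin.consEquiv fun _ ↦ β).hasSum_iff]
    refine (hasSum_mul_prod (hf 0) (ih fun j ↦ hf (Fin.succ j))).congr_fun fun x ↦ ?_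
    simp [Fin.consEquiv, Fin.prod_univ_succ]

lemma hasSum_prod_pi {κ β : Type*} [Fintype κ] {f : κ → β → ℂ} {a : κ → ℂ}
    (hf : ∀ j, HasSum (f j) (a j)) :
    HasSum (fun x : κ → β ↦ ∏ j, f j (x j)) (∏ j, a j) := by
  let e := (Fintype.equivFin κ).symm
  rw [← e.prod_comp a, ← (Equiv.arrowCongr e (Equiv.refl β)).hasSum_iff]
  refine (hasSum_prod_fin fun j ↦ hf (e j)).congr_fun fun x ↦ ?_
  simp [← e.prod_comp]

lemma hasSum_tsum_fiber_mul {X Y : Type*} (φ : X → Y) {c : X → ℂ} {e : Y → ℂ} {s : ℂ}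
    (h : HasSum (fun x ↦ c x * e (φ x)) s) :
    HasSum (fun y ↦ (∑' x : φ ⁻¹' {y}, c x) * e y) s := by
  refine (h.tsum_fiberwise φ).congr_fun fun y ↦ ?_
  rw [← tsum_mul_right]
  exact tsum_congr fun x ↦ by rw [x.2]

lemma tprod_one_sub_pow_ne_zero {q : ℂ} (hq : ‖q‖ < 1) : ∏' n : ℕ, (1 - q ^ (n + 1)) ≠ 0 := by
  simp only [sub_eq_add_neg]
  refine tprod_one_add_ne_zero_of_summable (fun n h ↦ ?_) ?_
  · have hpow : q ^ (n + 1) = 1 := by linear_combination -h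
    refine (pow_lt_one₀ (norm_nonneg q) hq n.succ_ne_zero).ne ?_
    rw [← norm_pow, hpow, norm_one]
  · simpa using (summable_nat_add_iff 1).mpr (summable_geometric_of_lt_one (norm_nonneg _) hq)

/-- The coefficient of `qⁿ` in the partition generating series `∏ₙ (1 - qⁿ)⁻¹`, as a Taylor
coefficient of the infinite product. -/
def partitionCoeff (n : ℕ) : ℂ :=
  (n.factorial : ℂ)⁻¹ * iteratedDeriv n (fun q ↦ (∏' k : ℕ, (1 - q ^ (k + 1)))⁻¹) 0

lemma partitionCoeff_zero : partitionCoeff 0 = 1 := by simp [partitionCoeff]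

lemma hasSum_partitionCoeff {q : ℂ} (hq : ‖q‖ < 1) :
    HasSum (fun n ↦ partitionCoeff n * q ^ n) (∏' k : ℕ, (1 - q ^ (k + 1)))⁻¹ := by
  have hdiff : DifferentiableOn ℂ (fun q : ℂ ↦ (∏' k : ℕ, (1 - q ^ (k + 1)))⁻¹)
      (Metric.ball 0 1) :=
    ModularForm.differentiableOn_tprod_one_sub_pow.inv fun q hq ↦
      tprod_one_sub_pow_ne_zero (mem_ball_zero_iff.mp hq)
  refine (hasSum_taylorSeries_on_ball hdiff (mem_ball_zero_iff.mpr hq)).congr_fun fun n ↦ ?_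
  simp only [partitionCoeff, sub_zero, smul_eq_mul]
  ring

lemma hasSum_inv_dedekindEta {τ : ℂ} (hτ : 0 < τ.im) :
    HasSum (fun n : ℕ ↦ partitionCoeff n * cexp (2 * π * I * ((n - 1 / 24) * τ)))
      (dedekindEta τ)⁻¹ := by
  have hq : ‖cexp (2 * π * I * τ)‖ < 1 := UpperHalfPlane.norm_exp_two_pi_I_lt_one ⟨τ, hτ⟩
  have hη : (dedekindEta τ)⁻¹ = (∏' k : ℕ, (1 - cexp (2 * π * I * τ) ^ (k + 1)))⁻¹ *
      cexp (-(π * I * τ / 12)) := by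
    rw [dedekindEta, mul_inv, mul_comm, ← Complex.exp_neg]
    congr! 5 with k
    rw [← Complex.exp_nat_mul]
    congr 1
    push_cast
    ring
  rw [hη]
  refine ((hasSum_partitionCoeff hq).mul_right _).congr_fun fun n ↦ ?_
  rw [mul_assoc (partitionCoeff n), ← Complex.exp_nat_mul, ← Complex.exp_add]
  congr 2
  ring

section LeastSquares

variable {ι κ : Type*} [Fintype ι] [Fintype κ]

/-- The normal equations `BᵀB x = Bᵀw`: they say that `B x` is the orthogonal projection of `w` to
the column space of `B`, so that `x` is the vector of the lattice with Gram matrix `BᵀB` whose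
scalar products are those of `w`. -/
def IsLeastSquares (B : Matrix κ ι ℤ) (x : ι → ℚ) (w : κ → ℚ) : Prop :=
  linearForms Bᵀ (linearForms B x) = linearForms Bᵀ w

variable {B : Matrix κ ι ℤ} {x : ι → ℚ} {w : κ → ℚ}

lemma IsLeastSquares.dotProduct_linearForms (h : IsLeastSquares B x w) (y : ι → ℚ) :
    linearForms B x ⬝ᵥ linearForms B y = w ⬝ᵥ linearForms B y := by
  rw [dotProduct_comm, ← dotProduct_linearForms_transpose, h, dotProduct_linearForms_transpose,
    dotProduct_comm]

lemma IsLeastSquares.bilinQ_eq (h : IsLeastSquares B x w) (y : ι → ℚ) :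
    bilinQ (Bᵀ * B) x y = w ⬝ᵥ linearForms B y := by
  rw [bilinQ_gram, h.dotProduct_linearForms]

lemma IsLeastSquares.bilinC_eq (h : IsLeastSquares B x w) (z : ι → ℂ) :
    bilinC (Bᵀ * B) (fun i ↦ x i) z = (fun j ↦ (w j : ℂ)) ⬝ᵥ linearForms B z := by
  have hcast : linearForms Bᵀ (linearForms B fun i ↦ (x i : ℂ)) =
      linearForms Bᵀ fun j ↦ (w j : ℂ) := by
    change linearForms Bᵀ (linearForms B (Rat.castHom ℂ ∘ x)) = linearForms Bᵀ (Rat.castHom ℂ ∘ w)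
    rw [linearForms_comp_ringHom, linearForms_comp_ringHom, h, linearForms_comp_ringHom]
  rw [bilinC_gram, dotProduct_comm, ← dotProduct_linearForms_transpose, hcast,
    dotProduct_linearForms_transpose, dotProduct_comm]

lemma IsLeastSquares.dotProduct_residual (h : IsLeastSquares B x w) :
    (w - linearForms B x) ⬝ᵥ (w - linearForms B x) = w ⬝ᵥ w - bilinQ (Bᵀ * B) x x := by
  simp only [bilinQ_gram, sub_dotProduct, dotProduct_sub, h.dotProduct_linearForms,
    dotProduct_comm (linearForms B x) w]
  ring

end LeastSquares

section Fourier

open UpperHalfPlane hiding I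

variable {ι κ : Type*} [Fintype κ]

/-- The vector `n / 2`; its entries are the frequencies `n / 2` of the theta series. -/
def halfVec (n : κ → ℤ) : κ → ℚ := fun j ↦ n j / 2

/-- The squared Euclidean distance from `w` to `B x`. -/
def distSq [Fintype ι] (B : Matrix κ ι ℤ) (x : ι → ℚ) (w : κ → ℚ) : ℚ :=
  (w - linearForms B x) ⬝ᵥ (w - linearForms B x)

/-- The vector `n` is odd, `n / 2` is nearest to the column space of `B` among the halves of odd
vectors, and no other odd `m` shares both this distance and the lattice vector `l n`. The terms of
index `n` are then alone in having their exponent. -/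
structure IsExtremal [Fintype ι] (B : Matrix κ ι ℤ) (l : (κ → ℤ) → ι → ℚ) (n : κ → ℤ) : Prop where
  odd : ∀ j, Odd (n j)
  distSq_le : ∀ m : κ → ℤ, (∀ j, Odd (m j)) →
    distSq B (l n) (halfVec n) ≤ distSq B (l m) (halfVec m)
  unique : ∀ m : κ → ℤ, (∀ j, Odd (m j)) →
    distSq B (l m) (halfVec m) = distSq B (l n) (halfVec n) → l m = l n → m = n

/-- The exponent of `q` and the lattice vector of the term of a theta block divided by `η` that is
the product of the terms of index `n` of the theta series with the `k`-th term of `1/η`. The lattice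
vector `l n` is to be a least squares solution for `n / 2`. -/
def blockExponent (l : (κ → ℤ) → ι → ℚ) (p : (κ → ℤ) × ℕ) : ℚ × (ι → ℚ) :=
  ((∑ j, (p.1 j : ℚ) ^ 2) / 8 - 1 / 24 + p.2, l p.1)

/-- The Fourier coefficients of a theta block divided by `η`, collecting the terms that have the
same exponent. -/
def blockCoeff (l : (κ → ℤ) → ι → ℚ) (y : ℚ × (ι → ℚ)) : ℂ :=
  ∑' p : blockExponent l ⁻¹' {y}, (∏ j, chi4 (p.1.1 j)) * partitionCoeff p.1.2

variable {B : Matrix κ ι ℤ} {l : (κ → ℤ) → ι → ℚ}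

lemma exists_of_blockCoeff_ne_zero {y : ℚ × (ι → ℚ)} (hy : blockCoeff l y ≠ 0) :
    ∃ n k, (∀ j, Odd (n j)) ∧ blockExponent l (n, k) = y := by
  contrapose! hy
  refine (tsum_congr fun p ↦ ?_).trans tsum_zero
  obtain ⟨⟨n, k⟩, hp⟩ := p
  obtain ⟨j, hj⟩ : ∃ j, ¬ Odd (n j) := by
    by_contra! hodd
    exact hy n k hodd hp
  rw [Finset.prod_eq_zero (Finset.mem_univ j) (not_not.mp (chi4_ne_zero_iff.not.mpr hj)), zero_mul]

variable [Fintype ι]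

lemma hasSum_thetaBlock (B : Matrix κ ι ℤ) {τ : ℂ} (hτ : 0 < τ.im) (z : ι → ℂ) :
    HasSum (fun n : κ → ℤ ↦ (∏ j, chi4 (n j)) * cexp (2 * π * I *
      ((∑ j, (n j : ℂ) ^ 2) / 8 * τ + (fun j ↦ (halfVec n j : ℂ)) ⬝ᵥ linearForms B z)))
      (thetaBlock B τ z) := by
  refine (hasSum_prod_pi fun j ↦
    (summable_jtheta_term hτ (linearForms B z j)).of_norm.hasSum).congr_fun fun n ↦ ?_
  rw [Finset.prod_mul_distrib, ← exp_sum, ← Finset.mul_sum, Finset.sum_add_distrib, dotProduct,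
    Finset.sum_div, Finset.sum_mul]
  congr 4
  · exact Finset.sum_congr rfl fun j _ ↦ by ring
  · exact Finset.sum_congr rfl fun j _ ↦ by rw [halfVec]; push_cast; ring

lemma hasSum_thetaBlock_div_dedekindEta (hl : ∀ n, IsLeastSquares B (l n) (halfVec n))
    {τ : ℂ} (hτ : 0 < τ.im) (z : ι → ℂ) :
    HasSum (fun y ↦ blockCoeff l y * cexp (2 * π * I *
      (y.1 * τ + bilinC (Bᵀ * B) (fun i ↦ y.2 i) z))) (thetaBlock B τ z / dedekindEta τ) := by
  refine hasSum_tsum_fiber_mul (blockExponent l)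
    (c := fun p ↦ (∏ j, chi4 (p.1 j)) * partitionCoeff p.2)
    (e := fun y ↦ cexp (2 * π * I * (y.1 * τ + bilinC (Bᵀ * B) (fun i ↦ y.2 i) z))) ?_
  rw [div_eq_mul_inv]
  refine (hasSum_mul_prod (hasSum_thetaBlock B hτ z) (hasSum_inv_dedekindEta hτ)).congr_fun
    fun p ↦ ?_
  rw [mul_mul_mul_comm, ← Complex.exp_add, blockExponent, (hl p.1).bilinC_eq]
  congr 2
  push_cast
  ring

lemma norm_blockExponent {n : κ → ℤ} (hl : IsLeastSquares B (l n) (halfVec n)) (k : ℕ) :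
    2 * (blockExponent l (n, k)).1 -
        bilinQ (Bᵀ * B) (blockExponent l (n, k)).2 (blockExponent l (n, k)).2 =
      distSq B (l n) (halfVec n) - 1 / 12 + 2 * k := by
  have hhalf : halfVec n ⬝ᵥ halfVec n = (∑ j, (n j : ℚ) ^ 2) / 4 := by
    rw [dotProduct, Finset.sum_div]
    exact Finset.sum_congr rfl fun j _ ↦ by rw [halfVec]; ring
  rw [distSq, hl.dotProduct_residual, hhalf, blockExponent]
  ring

lemma le_norm_of_blockCoeff_ne_zero (hl : ∀ n, IsLeastSquares B (l n) (halfVec n)) {n : κ → ℤ}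
    (hn : IsExtremal B l n) {y : ℚ × (ι → ℚ)} (hy : blockCoeff l y ≠ 0) :
    distSq B (l n) (halfVec n) - 1 / 12 ≤ 2 * y.1 - bilinQ (Bᵀ * B) y.2 y.2 := by
  obtain ⟨m, k, hm, rfl⟩ := exists_of_blockCoeff_ne_zero hy
  rw [norm_blockExponent (hl m)]
  linarith [hn.distSq_le m hm, k.cast_nonneg (α := ℚ)]

lemma blockCoeff_ne_zero (hl : ∀ n, IsLeastSquares B (l n) (halfVec n)) {n : κ → ℤ}
    (hn : IsExtremal B l n) : blockCoeff l (blockExponent l (n, 0)) ≠ 0 := by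
  rw [blockCoeff, tsum_eq_single ⟨(n, 0), rfl⟩]
  · rw [partitionCoeff_zero, mul_one]
    exact Finset.prod_ne_zero_iff.mpr fun j _ ↦ chi4_ne_zero_iff.mpr (hn.odd j)
  · rintro ⟨⟨m, k⟩, hmk⟩ hne
    contrapose! hne
    have hm (j : κ) : Odd (m j) :=
      chi4_ne_zero_iff.mp
        (Finset.prod_ne_zero_iff.mp (left_ne_zero_of_mul hne) j (Finset.mem_univ j))
    have hnorm := norm_blockExponent (hl m) k
    rw [hmk, norm_blockExponent (hl n) 0] at hnorm
    have hk : k = 0 := by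
      have := hn.distSq_le m hm
      have := k.cast_nonneg (α := ℚ)
      exact_mod_cast (by push_cast at hnorm; linarith : (k : ℚ) = 0)
    subst hk
    have hmn : m = n := hn.unique m hm (by linarith) (congrArg Prod.snd hmk)
    simp only [hmn]

lemma inHalfDual_of_isLeastSquares {n : κ → ℤ} {x : ι → ℚ} (h : IsLeastSquares B x (halfVec n)) :
    InHalfDual (Bᵀ * B) x := by
  intro y
  refine ⟨n ⬝ᵥ linearForms B y, ?_⟩
  have hcast : linearForms B (fun i ↦ (y i : ℚ)) = fun j ↦ ((linearForms B y j : ℤ) : ℚ) :=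
    linearForms_comp_ringHom B (Int.castRingHom ℚ) y
  rw [h.bilinQ_eq, hcast, dotProduct, dotProduct, Finset.mul_sum, Int.cast_sum]
  exact Finset.sum_congr rfl fun j _ ↦ by rw [halfVec]; push_cast; ring

lemma bilinQ_gram_self_nonneg (B : Matrix κ ι ℤ) (x : ι → ℚ) : 0 ≤ bilinQ (Bᵀ * B) x x := by
  rw [bilinQ_gram]
  exact Finset.sum_nonneg fun j _ ↦ mul_self_nonneg _

theorem isJacobiForm_thetaBlock_div_dedekindEta (hB : ∀ i, Even (∑ j, B j i))
    (hl : ∀ n, IsLeastSquares B (l n) (halfVec n))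
    {n : κ → ℤ} (hn : IsExtremal B l n) (hdist : 1 / 12 ≤ distSq B (l n) (halfVec n)) {N r : ℕ}
    (hN : N + 24 * r + 1 = 3 * Fintype.card κ) {v : SL2Z → ℂ}
    (hv : ∀ A : SL2Z, ∀ τ : ℂ, 0 < τ.im →
      dedekindEta ((A.1 0 0 * τ + A.1 0 1) / (A.1 1 0 * τ + A.1 1 1)) ^ N =
        v A * (A.1 1 0 * τ + A.1 1 1 : ℂ) ^ ((N : ℂ) / 2) * dedekindEta τ ^ N) :
    IsJacobiForm (Bᵀ * B) ((Fintype.card κ - 1) / 2) 1 v (fun _ _ ↦ 1) (blockCoeff l)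
      (fun τ z ↦ thetaBlock B τ z / dedekindEta τ) where
  holo p hp := by
    have hη : DifferentiableAt ℂ (fun p : ℂ × (ι → ℂ) ↦ dedekindEta p.1) p :=
      (differentiableAt_dedekindEta hp).comp p differentiableAt_fst
    simp only [div_eq_mul_inv]
    exact ((differentiableAt_thetaBlock B hp p.2).fun_mul
      (hη.fun_inv (dedekindEta_ne_zero hp))).differentiableWithinAt
  modular A τ hτ z := by
    have hden : denom A (⟨τ, hτ⟩ : ℍ) = A.1 1 0 * τ + A.1 1 1 := ModularGroup.denom_apply A ⟨τ, hτ⟩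
    have hsmul : ((A • ⟨τ, hτ⟩ : ℍ) : ℂ) =
        (A.1 0 0 * τ + A.1 0 1) / (A.1 1 0 * τ + A.1 1 1) :=
      (UpperHalfPlane.coe_specialLinearGroup_apply A ⟨τ, hτ⟩).trans (by simp)
    have h := thetaBlock_div_dedekindEta_smul B hN (v := v A) A (τ := ⟨τ, hτ⟩)
      (by rw [hsmul, hden]; exact hv A τ hτ) z
    rw [hsmul, hden] at h
    rw [h]
    push_cast
    congr 3
    ring
  elliptic x y τ _ z := by
    rw [thetaBlock_add_mul_add hB, one_mul, Rat.cast_one, mul_one, mul_div_assoc]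
  support y hy := by
    have hpos := le_norm_of_blockCoeff_ne_zero hl hn hy
    have hnonneg := bilinQ_gram_self_nonneg B y.2
    refine ⟨by linarith, ?_, by linarith⟩
    obtain ⟨n, k, -, rfl⟩ := exists_of_blockCoeff_ne_zero hy
    exact inHalfDual_of_isLeastSquares (hl n)
  expansion _ hτ z := hasSum_thetaBlock_div_dedekindEta hl hτ z

theorem exists_isJacobiForm_thetaBlock_div_dedekindEta (hB : ∀ i, Even (∑ j, B j i))
    (hl : ∀ n, IsLeastSquares B (l n) (halfVec n)) {n : κ → ℤ} (hn : IsExtremal B l n)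
    (hdist : 1 / 12 ≤ distSq B (l n) (halfVec n)) {N r : ℕ}
    (hN : N + 24 * r + 1 = 3 * Fintype.card κ) {v : SL2Z → ℂ}
    (hv : ∀ A : SL2Z, ∀ τ : ℂ, 0 < τ.im →
      dedekindEta ((A.1 0 0 * τ + A.1 0 1) / (A.1 1 0 * τ + A.1 1 1)) ^ N =
        v A * (A.1 1 0 * τ + A.1 1 1 : ℂ) ^ ((N : ℂ) / 2) * dedekindEta τ ^ N) :
    ∃ g : ℚ × (ι → ℚ) → ℂ,
      IsJacobiForm (Bᵀ * B) ((Fintype.card κ - 1) / 2) 1 v (fun _ _ ↦ 1) g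
        (fun τ z ↦ thetaBlock B τ z / dedekindEta τ) ∧
      (∀ p, g p ≠ 0 →
        distSq B (l n) (halfVec n) - 1 / 12 ≤ 2 * p.1 - bilinQ (Bᵀ * B) p.2 p.2) ∧
      ∃ p, g p ≠ 0 ∧
        2 * p.1 - bilinQ (Bᵀ * B) p.2 p.2 = distSq B (l n) (halfVec n) - 1 / 12 :=
  ⟨blockCoeff l, isJacobiForm_thetaBlock_div_dedekindEta hB hl hn hdist hN hv,
    fun _ ↦ le_norm_of_blockCoeff_ne_zero hl hn, blockExponent l (n, 0), blockCoeff_ne_zero hl hn,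
    by simp [norm_blockExponent (hl n)]⟩

end Fourier

/-! ### Orthogonal sums -/

section OrthogonalSum

variable {ι ι' κ κ' R : Type*} [CommRing R]

lemma halfVec_eq_sumElim (n : κ ⊕ κ' → ℤ) :
    halfVec n = Sum.elim (halfVec (n ∘ Sum.inl)) (halfVec (n ∘ Sum.inr)) := by
  ext (j | j) <;> rfl

lemma linearForms_fromBlocks [Fintype ι] [Fintype ι'] (B : Matrix κ ι ℤ) (C : Matrix κ' ι' ℤ)
    (x : ι ⊕ ι' → R) :
    linearForms (fromBlocks B 0 0 C) x =
      Sum.elim (linearForms B (x ∘ Sum.inl)) (linearForms C (x ∘ Sum.inr)) := by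
  ext (j | j) <;> simp [linearForms_apply]

lemma gram_fromBlocks [Fintype κ] [Fintype κ'] (B : Matrix κ ι ℤ) (C : Matrix κ' ι' ℤ) :
    (fromBlocks B 0 0 C)ᵀ * fromBlocks B 0 0 C = fromBlocks (Bᵀ * B) 0 0 (Cᵀ * C) := by
  simp [fromBlocks_transpose, fromBlocks_multiply]

lemma even_sum_fromBlocks [Fintype κ] [Fintype κ'] {B : Matrix κ ι ℤ} {C : Matrix κ' ι' ℤ}
    (hB : ∀ i, Even (∑ j, B j i)) (hC : ∀ i, Even (∑ j, C j i)) (i : ι ⊕ ι') :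
    Even (∑ j, fromBlocks B 0 0 C j i) := by
  rw [Fintype.sum_sum_type]
  rcases i with i | i
  · simpa using hB i
  · simpa using hC i

variable [Fintype ι] [Fintype ι'] [Fintype κ] [Fintype κ']

lemma thetaBlock_fromBlocks (B : Matrix κ ι ℤ) (C : Matrix κ' ι' ℤ) (τ : ℂ) (z : ι ⊕ ι' → ℂ) :
    thetaBlock (fromBlocks B 0 0 C) τ z =
      thetaBlock B τ (z ∘ Sum.inl) * thetaBlock C τ (z ∘ Sum.inr) := by
  simp [thetaBlock, linearForms_fromBlocks]

variable {B : Matrix κ ι ℤ} {C : Matrix κ' ι' ℤ} {x : ι → ℚ} {x' : ι' → ℚ} {w : κ → ℚ}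
  {w' : κ' → ℚ}

lemma IsLeastSquares.fromBlocks (h : IsLeastSquares B x w) (h' : IsLeastSquares C x' w') :
    IsLeastSquares (fromBlocks B 0 0 C) (Sum.elim x x') (Sum.elim w w') := by
  rw [IsLeastSquares] at *
  simp only [fromBlocks_transpose, transpose_zero, linearForms_fromBlocks, Sum.elim_comp_inl,
    Sum.elim_comp_inr, h, h']

lemma distSq_fromBlocks :
    distSq (fromBlocks B 0 0 C) (Sum.elim x x') (Sum.elim w w') =
      distSq B x w + distSq C x' w' := by
  simp [distSq, dotProduct, linearForms_fromBlocks]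

lemma IsExtremal.fromBlocks {l : (κ → ℤ) → ι → ℚ} {l' : (κ' → ℤ) → ι' → ℚ} {n : κ → ℤ}
    {n' : κ' → ℤ} (h : IsExtremal B l n) (h' : IsExtremal C l' n') :
    IsExtremal (fromBlocks B 0 0 C) (fun m ↦ Sum.elim (l (m ∘ Sum.inl)) (l' (m ∘ Sum.inr)))
      (Sum.elim n n') where
  odd := Sum.forall.mpr ⟨h.odd, h'.odd⟩
  distSq_le m hm := by
    simp only [halfVec_eq_sumElim, distSq_fromBlocks, Sum.elim_comp_inl, Sum.elim_comp_inr]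
    exact add_le_add (h.distSq_le _ fun j ↦ hm _) (h'.distSq_le _ fun j ↦ hm _)
  unique m hm hdist hl := by
    simp only [halfVec_eq_sumElim, distSq_fromBlocks, Sum.elim_comp_inl, Sum.elim_comp_inr]
      at hdist hl
    have hle := h.distSq_le (m ∘ Sum.inl) fun j ↦ hm _
    have hle' := h'.distSq_le (m ∘ Sum.inr) fun j ↦ hm _
    have hl_inl := congrArg (· ∘ Sum.inl) hl
    have hl_inr := congrArg (· ∘ Sum.inr) hl
    simp only [Sum.elim_comp_inl, Sum.elim_comp_inr] at hl_inl hl_inr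
    rw [← h.unique (m ∘ Sum.inl) (fun j ↦ hm _) (by linarith) hl_inl,
      ← h'.unique (m ∘ Sum.inr) (fun j ↦ hm _) (by linarith) hl_inr, Sum.elim_comp_inl_inr]

end OrthogonalSum

/-! ### Root lattices of type A -/

section RootLattice

variable {m : ℕ}

/-- The `m + 1` linear forms `z₁, …, z_m, z₁ + ⋯ + z_m`. -/
def amForms (m : ℕ) : Matrix (Fin m ⊕ Unit) (Fin m) ℤ := fromRows 1 (Matrix.of fun _ _ ↦ 1)

lemma linearForms_amForms {R : Type*} [CommRing R] (x : Fin m → R) :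
    linearForms (amForms m) x = Sum.elim x fun _ ↦ ∑ i, x i := by
  ext (j | j) <;> simp [linearForms_apply, amForms, Matrix.one_apply]

lemma linearForms_amForms_transpose {R : Type*} [CommRing R] (w : Fin m ⊕ Unit → R) (i : Fin m) :
    linearForms (amForms m)ᵀ w i = w (Sum.inl i) + w (Sum.inr ()) := by
  simp [linearForms_apply, amForms, Matrix.one_apply]

lemma gram_amForms (m : ℕ) : (amForms m)ᵀ * amForms m = AmGram m := by
  ext i j
  by_cases h : i = j <;>
    simp [amForms, AmGram, transpose_fromRows, h, Matrix.mul_apply, Matrix.one_apply]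

lemma thetaBlock_amForms (m : ℕ) : thetaBlock (amForms m) = thetaAm m := by
  ext τ z
  simp [thetaBlock, thetaAm, linearForms_amForms]

lemma even_sum_amForms (i : Fin m) : Even (∑ j, amForms m j i) := by
  simp [amForms, Matrix.one_apply]

/-- The linear form `w₁ + ⋯ + w_m - w_{m+1}`, which cuts out the image of the forms `amForms m`. -/
def amDefect {R : Type*} [CommRing R] (w : Fin m ⊕ Unit → R) : R :=
  ∑ i, w (Sum.inl i) - w (Sum.inr ())

/-- The least squares solution for `amForms m`. It subtracts from `w` a multiple of the normal
vector `(1, …, 1, -1)`. -/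
def amProj (w : Fin m ⊕ Unit → ℚ) : Fin m → ℚ := fun i ↦ w (Sum.inl i) - amDefect w / (m + 1)

lemma sub_linearForms_amProj (w : Fin m ⊕ Unit → ℚ) :
    w - linearForms (amForms m) (amProj w) =
      (amDefect w / (m + 1)) • Sum.elim (fun _ ↦ 1) fun _ ↦ -1 := by
  rw [linearForms_amForms]
  ext (i | i)
  · simp [amProj]
  · have hsum : ∑ i, amProj w i = ∑ i, w (Sum.inl i) - m * (amDefect w / (m + 1)) := by
      simp [amProj]
    have hm : (m + 1 : ℚ) ≠ 0 := by positivity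
    simp only [Pi.sub_apply, Sum.elim_inr, hsum, Pi.smul_apply, smul_eq_mul]
    field_simp
    simp only [amDefect]
    ring

lemma isLeastSquares_amProj (w : Fin m ⊕ Unit → ℚ) : IsLeastSquares (amForms m) (amProj w) w := by
  have hnormal : linearForms (amForms m)ᵀ (w - linearForms (amForms m) (amProj w)) = 0 := by
    rw [sub_linearForms_amProj]
    ext i
    simp [linearForms_amForms_transpose]
  rw [map_sub, sub_eq_zero] at hnormal
  exact hnormal.symm

lemma amDefect_halfVec (n : Fin m ⊕ Unit → ℤ) :
    amDefect (halfVec n) = ((amDefect n : ℤ) : ℚ) / 2 := by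
  simp [amDefect, halfVec, sub_div, Finset.sum_div]

lemma distSq_amProj (n : Fin m ⊕ Unit → ℤ) :
    distSq (amForms m) (amProj (halfVec n)) (halfVec n) =
      ((amDefect n : ℤ) : ℚ) ^ 2 / (4 * (m + 1)) := by
  have hm : (m + 1 : ℚ) ≠ 0 := by positivity
  rw [distSq, sub_linearForms_amProj, amDefect_halfVec]
  simp only [dotProduct, Fintype.sum_sum_type, Pi.smul_apply, Sum.elim_inl, Sum.elim_inr,
    smul_eq_mul, Finset.sum_const, Finset.card_univ, Fintype.card_fin, Fintype.card_unit, one_smul,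
    nsmul_eq_mul]
  field_simp
  ring

lemma one_le_amDefect_sq (hm : Even m) {n : Fin m ⊕ Unit → ℤ} (hn : ∀ j, Odd (n j)) :
    1 ≤ amDefect n ^ 2 := by
  have hsum : Even (∑ i : Fin m, (n (Sum.inl i) - 1)) :=
    Finset.even_sum _ fun i _ ↦ (hn _).sub_odd odd_one
  have hodd : Odd (amDefect n) := by
    refine Even.sub_odd ?_ (hn _)
    simpa [Finset.sum_sub_distrib, Int.even_sub, hm] using hsum
  rw [one_le_sq_iff_one_le_abs]
  exact Int.one_le_abs fun h ↦ by simp [h] at hodd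

lemma amDefect_eq_of_amProj_eq (hm : 2 ≤ m) {n n' : Fin m ⊕ Unit → ℤ} (hn : amDefect n ^ 2 = 1)
    (hn' : amDefect n' ^ 2 = 1) (h : amProj (halfVec n) = amProj (halfVec n')) :
    amDefect n = amDefect n' := by
  have hlast : (m + 1) * (n (Sum.inr ()) - n' (Sum.inr ())) = amDefect n' - amDefect n := by
    have hn_last := congrFun (sub_linearForms_amProj (halfVec n)) (Sum.inr ())
    have hn'_last := congrFun (sub_linearForms_amProj (halfVec n')) (Sum.inr ())
    rw [← h] at hn'_last
    simp only [Pi.sub_apply, halfVec, amDefect_halfVec, Pi.smul_apply, Sum.elim_inr,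
      smul_eq_mul] at hn_last hn'_last
    have hm' : (m + 1 : ℚ) ≠ 0 := by positivity
    have hcast : ((m : ℚ) + 1) * (n (Sum.inr ()) - n' (Sum.inr ())) =
        (amDefect n' : ℤ) - (amDefect n : ℤ) := by
      field_simp at hn_last hn'_last
      linear_combination hn_last - hn'_last
    exact_mod_cast hcast
  have hdvd : (m + 1 : ℤ) ∣ amDefect n' - amDefect n := ⟨_, hlast.symm⟩
  refine (sub_eq_zero.mp (Int.eq_zero_of_abs_lt_dvd hdvd ?_)).symm
  rcases _root_.sq_eq_one_iff.mp hn with hs | hs <;>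
    rcases _root_.sq_eq_one_iff.mp hn' with hs' | hs' <;> rw [hs, hs'] <;> norm_num <;> omega

lemma eq_of_amProj_eq {n n' : Fin m ⊕ Unit → ℤ} (hdefect : amDefect n = amDefect n')
    (h : amProj (halfVec n) = amProj (halfVec n')) : n = n' := by
  have hhalf : halfVec n = halfVec n' := by
    rw [← sub_left_inj (a := linearForms (amForms m) (amProj (halfVec n)))]
    conv_rhs => rw [h]
    rw [sub_linearForms_amProj, sub_linearForms_amProj, amDefect_halfVec, amDefect_halfVec, hdefect]
  ext j
  simpa [halfVec] using congrFun hhalf j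

/-- The vector `(1, -1, 1, -1, …; 1)`, of defect `-1` when `m` is even. -/
def amAlternating (m : ℕ) : Fin m ⊕ Unit → ℤ := Sum.elim (fun i ↦ (-1) ^ (i : ℕ)) fun _ ↦ 1

lemma amDefect_amAlternating (hm : Even m) : amDefect (amAlternating m) = -1 := by
  simp [amDefect, amAlternating, Fin.sum_neg_one_pow, hm]

lemma distSq_amAlternating (hm : Even m) :
    distSq (amForms m) (amProj (halfVec (amAlternating m))) (halfVec (amAlternating m)) =
      1 / (4 * (m + 1)) := by
  simp [distSq_amProj, amDefect_amAlternating hm]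

lemma isExtremal_amAlternating (hm : Even m) (hm2 : 2 ≤ m) :
    IsExtremal (amForms m) (fun n ↦ amProj (halfVec n)) (amAlternating m) where
  odd := Sum.forall.mpr ⟨fun _ ↦ odd_neg_one.pow, fun _ ↦ odd_one⟩
  distSq_le n hn := by
    rw [distSq_amAlternating hm, distSq_amProj]
    gcongr
    exact_mod_cast one_le_amDefect_sq hm hn
  unique n _ hdist h := by
    have hsq : amDefect n ^ 2 = 1 := by
      rw [distSq_amAlternating hm, distSq_amProj, div_left_inj' (by positivity)] at hdist
      exact_mod_cast hdist
    exact eq_of_amProj_eq (amDefect_eq_of_amProj_eq hm2 hsq (by simp [amDefect_amAlternating hm]) h)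
      h

theorem statement16_general {a b N r : ℕ} {k δ : ℚ} (ha : Even a) (hb : Even b) (ha2 : 2 ≤ a)
    (hb2 : 2 ≤ b) (hk : k = (a + b + 1) / 2)
    (hδ : δ = 1 / (4 * (a + 1)) + 1 / (4 * (b + 1)) - 1 / 12) (hδ0 : 0 ≤ δ)
    (hN : N + 24 * r + 1 = 3 * (a + b + 2)) {v : SL2Z → ℂ}
    (hv : ∀ A : SL2Z, ∀ τ : ℂ, 0 < τ.im →
      dedekindEta ((A.1 0 0 * τ + A.1 0 1) / (A.1 1 0 * τ + A.1 1 1)) ^ N =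
        v A * (A.1 1 0 * τ + A.1 1 1 : ℂ) ^ ((N : ℂ) / 2) * dedekindEta τ ^ N) :
    ∃ g : ℚ × (Fin a ⊕ Fin b → ℚ) → ℂ,
      IsJacobiForm (fromBlocks (AmGram a) 0 0 (AmGram b)) k 1 v (fun _ _ ↦ 1) g
        (fun τ z ↦ thetaAm a τ (z ∘ Sum.inl) * thetaAm b τ (z ∘ Sum.inr) / dedekindEta τ) ∧
      (∀ p, g p ≠ 0 → δ ≤ 2 * p.1 - bilinQ (fromBlocks (AmGram a) 0 0 (AmGram b)) p.2 p.2) ∧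
      ∃ p, g p ≠ 0 ∧
        2 * p.1 - bilinQ (fromBlocks (AmGram a) 0 0 (AmGram b)) p.2 p.2 = δ := by
  have hcols := even_sum_fromBlocks (even_sum_amForms (m := a)) (even_sum_amForms (m := b))
  have hl (n : (Fin a ⊕ Unit) ⊕ (Fin b ⊕ Unit) → ℤ) :=
    (isLeastSquares_amProj (halfVec (n ∘ Sum.inl))).fromBlocks
      (isLeastSquares_amProj (halfVec (n ∘ Sum.inr)))
  simp only [← halfVec_eq_sumElim] at hl
  have hextremal := (isExtremal_amAlternating ha ha2).fromBlocks (isExtremal_amAlternating hb hb2)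
  have hdist : distSq (fromBlocks (amForms a) 0 0 (amForms b))
      (Sum.elim (amProj (halfVec (amAlternating a))) (amProj (halfVec (amAlternating b))))
      (halfVec (Sum.elim (amAlternating a) (amAlternating b))) = δ + 1 / 12 := by
    rw [halfVec_eq_sumElim (Sum.elim _ _), Sum.elim_comp_inl, Sum.elim_comp_inr, distSq_fromBlocks,
      distSq_amAlternating ha, distSq_amAlternating hb, hδ, sub_add_cancel]
  have hcard : Fintype.card ((Fin a ⊕ Unit) ⊕ (Fin b ⊕ Unit)) = a + b + 2 := by
    simp only [Fintype.card_sum, Fintype.card_fin, Fintype.card_unit]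
    ring
  have hweight : ((a + b + 2 : ℕ) - 1 : ℚ) / 2 = k := by
    rw [hk]
    push_cast
    ring
  have h := exists_isJacobiForm_thetaBlock_div_dedekindEta (N := N) (r := r) hcols hl hextremal
    (by simp only [Sum.elim_comp_inl, Sum.elim_comp_inr]; rw [hdist]; linarith)
    (by rw [hN, hcard]) hv
  simpa only [Sum.elim_comp_inl, Sum.elim_comp_inr, hdist, add_sub_cancel_right, gram_fromBlocks,
    gram_amForms, thetaBlock_fromBlocks, thetaBlock_amForms, hcard, hweight] using h

end RootLattice

/-- `κ_{2A₄}` is a Jacobi cusp form of critical weight `9/2` and index `1`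
for `2A₄` with multiplier system `v_η^5`, of order exactly `1/60`; and `κ_{A₄⊕A₆}` is a Jacobi
cusp form of critical weight `11/2` and index `1` for `A₄⊕A₆` with multiplier system
`v_η^{11}`, of order exactly `1/420`. -/
theorem statement16
    (vη5 vη11 : SL2Z → ℂ)
    (hvη5 : ∀ A : SL2Z, ∀ τ : ℂ, 0 < τ.im →
      dedekindEta (((A.1 0 0 : ℂ) * τ + (A.1 0 1 : ℂ))
            / ((A.1 1 0 : ℂ) * τ + (A.1 1 1 : ℂ))) ^ (5 : ℕ)
        = vη5 A * ((A.1 1 0 : ℂ) * τ + (A.1 1 1 : ℂ)) ^ (((5 : ℕ) : ℂ) / 2)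
          * dedekindEta τ ^ (5 : ℕ))
    (hvη11 : ∀ A : SL2Z, ∀ τ : ℂ, 0 < τ.im →
      dedekindEta (((A.1 0 0 : ℂ) * τ + (A.1 0 1 : ℂ))
            / ((A.1 1 0 : ℂ) * τ + (A.1 1 1 : ℂ))) ^ (11 : ℕ)
        = vη11 A * ((A.1 1 0 : ℂ) * τ + (A.1 1 1 : ℂ)) ^ (((11 : ℕ) : ℂ) / 2)
          * dedekindEta τ ^ (11 : ℕ)) :
    (∃ g : ℚ × (Fin 4 ⊕ Fin 4 → ℚ) → ℂ,
      IsJacobiForm (Matrix.fromBlocks (AmGram 4) 0 0 (AmGram 4)) (9 / 2) 1 vη5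
        (fun _ _ => 1) g kappa2A4 ∧
      (∀ p, g p ≠ 0 → 1 / 60 ≤ 2 * p.1
          - bilinQ (Matrix.fromBlocks (AmGram 4) 0 0 (AmGram 4)) p.2 p.2) ∧
      (∃ p, g p ≠ 0 ∧ 2 * p.1
          - bilinQ (Matrix.fromBlocks (AmGram 4) 0 0 (AmGram 4)) p.2 p.2 = 1 / 60)) ∧
    (∃ g : ℚ × (Fin 4 ⊕ Fin 6 → ℚ) → ℂ,
      IsJacobiForm (Matrix.fromBlocks (AmGram 4) 0 0 (AmGram 6)) (11 / 2) 1 vη11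
        (fun _ _ => 1) g kappaA4A6 ∧
      (∀ p, g p ≠ 0 → 1 / 420 ≤ 2 * p.1
          - bilinQ (Matrix.fromBlocks (AmGram 4) 0 0 (AmGram 6)) p.2 p.2) ∧
      (∃ p, g p ≠ 0 ∧ 2 * p.1
          - bilinQ (Matrix.fromBlocks (AmGram 4) 0 0 (AmGram 6)) p.2 p.2 = 1 / 420)) :=
  ⟨statement16_general (r := 1) (by decide) (by decide) (by norm_num) (by norm_num) (by norm_num)
      (by norm_num) (by norm_num) rfl hvη5,
    statement16_general (r := 1) (by decide) (by decide) (by norm_num) (by norm_num) (by norm_num)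
      (by norm_num) (by norm_num) rfl hvη11⟩
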